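/- For any subset G₀ of a finite abelian group G, with ℬ(G₀) graded by total degree, c_gr(ℬ(G₀)) ≤ 2·d(G₀) + 2 ≤ 2·D(G) ≤ 2·|G|. -/

import Mathlib

/-!
The constants are compared through product-one-free sequences. By the pigeonhole principle on
products of initial segments such a sequence has length less than `|G|` (`exists_block_le`).
An atom minus one element is product-one free, so atoms of `ℬ(G₀)` have length at most
`d(G₀) + 1` (`degE_atom_le`); appending the inverse of its product to a product-one-free sequence
over `G₀` gives an atom over `G`, so `d(G₀) + 1 ≤ D(G)` (`littleDav_add_one_le`).

For the graded catenary degree, put `d = d(G₀)` and induct on the degree of the factored element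
`A`. If `|A| ≤ 2d + 2`, any two factorizations form one admissible step. If `|A| ≥ 2d + 3`, two
factorizations with a common atom are connected by induction after cancelling it, so two atoms
`U, V` with `U + V ≤ A` have connected sets of factorizations. It remains to join any two atoms
dividing `A` by a sequence of atoms whose neighbours satisfy this (`linked_of_le`). Every atom lies
in a subsequence of `A` of length `d + 1`, and every such subsequence contains an atom. Two of these
subsequences differing by one exchange have a union of length `d + 2`, whose complement in `A` has
length at least `d + 1` and so contains an atom `W`; then `W` plus any atom in either of the two
subsequences is at most `A`. Exchanges of one element connect all subsequences of length `d + 1`.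
-/

/-! ## Common definitions: atoms, factorizations, catenary degrees -/

/-- An atom of an additive commutative monoid: a nonzero element that cannot be
written as a sum of two nonzero elements. -/
def IsAtm {S : Type*} [AddCommMonoid S] (a : S) : Prop :=
  a ≠ 0 ∧ ∀ b c : S, a = b + c → b = 0 ∨ c = 0

/-- The set of atoms of an additive commutative monoid. -/
def Atoms (S : Type*) [AddCommMonoid S] : Set S := {a | IsAtm a}

/-- Exponent vectors: the free commutative monoid on the set of atoms (written additively). -/
abbrev FreeExp (S : Type*) [AddCommMonoid S] := ↥(Atoms S) →₀ ℕ

/-- The factorization homomorphism, sending an exponent vector `α` to `a^α ∈ S`. -/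
def fac {S : Type*} [AddCommMonoid S] (α : FreeExp S) : S :=
  α.sum fun a n => n • (a : S)

lemma fac_add {S : Type*} [AddCommMonoid S] (α β : FreeExp S) :
    fac (α + β) = fac α + fac β :=
  Finsupp.sum_add_index' (fun _ => zero_nsmul _) (fun a m n => add_nsmul (a : S) m n)

/-- Total degree (length) `|α|` of an exponent vector. -/
def degE {σ : Type*} (α : σ →₀ ℕ) : ℕ := α.sum fun _ n => n

/-- Pointwise minimum (the gcd in the free commutative monoid). -/
noncomputable def gcdE {σ : Type*} (α β : σ →₀ ℕ) : σ →₀ ℕ :=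
  Finsupp.zipWith min (min_self 0) α β

/-- The distance `d(α,γ)` between two exponent vectors. -/
noncomputable def dDist {σ : Type*} (α β : σ →₀ ℕ) : ℕ :=
  max (degE (α - gcdE α β)) (degE (β - gcdE α β))

/-- `α` and `γ` can be connected by a `d`-chain. -/
def ChainConn {S : Type*} [AddCommMonoid S] (d : ℕ) (α γ : FreeExp S) : Prop :=
  ∃ (k : ℕ) (c : ℕ → FreeExp S), c 0 = α ∧ c k = γ ∧
    ∀ j < k, fac (c j) = fac (c (j + 1)) ∧ dDist (c j) (c (j + 1)) ≤ d

/-- The catenary degree of `S`. -/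
noncomputable def catDeg (S : Type*) [AddCommMonoid S] : ℕ :=
  sInf {d | ∀ α γ : FreeExp S, fac α = fac γ → ChainConn d α γ}

/-- Graded degree `|α|_gr` of an exponent vector, w.r.t. a weight (grading) `w` on `S`. -/
def gdegE {S : Type*} [AddCommMonoid S] (w : S → ℕ) (α : FreeExp S) : ℕ :=
  α.sum fun a n => n * w (a : S)

/-- The graded distance `d_gr(α,γ)`. -/
noncomputable def dDistGr {S : Type*} [AddCommMonoid S] (w : S → ℕ) (α β : FreeExp S) : ℕ :=
  max (gdegE w (α - gcdE α β)) (gdegE w (β - gcdE α β))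

/-- `α` and `γ` can be connected by a chain of weight at most `d`. -/
def ChainConnGr {S : Type*} [AddCommMonoid S] (w : S → ℕ) (d : ℕ) (α γ : FreeExp S) : Prop :=
  ∃ (k : ℕ) (c : ℕ → FreeExp S), c 0 = α ∧ c k = γ ∧
    ∀ j < k, fac (c j) = fac (c (j + 1)) ∧ dDistGr w (c j) (c (j + 1)) ≤ d

/-- The graded catenary degree of `S` w.r.t. the grading `w`. -/
noncomputable def catDegGr (S : Type*) [AddCommMonoid S] (w : S → ℕ) : ℕ :=
  sInf {d | ∀ α γ : FreeExp S, fac α = fac γ → ChainConnGr w d α γ}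

/-- The defining congruence `∼_S` of `S` on the free commutative monoid on the atoms. -/
def defCon (S : Type*) [AddCommMonoid S] : AddCon (FreeExp S) where
  r α β := fac α = fac β
  iseqv := ⟨fun _ => rfl, Eq.symm, Eq.trans⟩
  add' := fun {a b c d} h1 h2 => by
    have h1' : fac a = fac b := h1
    have h2' : fac c = fac d := h2
    show fac (a + c) = fac (b + d)
    rw [fac_add, fac_add, h1', h2']

/-- A reduced affine monoid: commutative, cancellative, a finitely generated monoid embedding
into a finitely generated free abelian group, whose only unit is the identity. -/
class IsReducedAffine (S : Type*) [AddCommMonoid S] : Prop where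
  cancel : ∀ a b c : S, a + b = a + c → b = c
  affine : ∃ (k : ℕ) (f : S →+ (Fin k → ℤ)), Function.Injective f
  fg : AddMonoid.FG S
  reduced : ∀ s : S, IsAddUnit s → s = 0

/-! ## The tilde construction -/

/-- The atoms of `S̃`: pairs `a[i]` with `a` an atom of `S` and `0 ≤ i ≤ |a|`. -/
def ATil (S : Type*) [AddCommMonoid S] (w : S → ℕ) : Type _ :=
  {p : ↥(Atoms S) × ℕ // p.2 ≤ w (p.1 : S)}

/-- Constructor `a[i]` for atoms of `S̃`. -/
def atil {S : Type*} [AddCommMonoid S] (w : S → ℕ) (a : ↥(Atoms S)) (i : ℕ)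
    (h : i ≤ w (a : S)) : ATil S w := ⟨(a, i), h⟩

/-- The map `κ : ℕ₀^{𝒜(S̃)} → ℕ₀^{𝒜(S)}`, `κ(λ)(a) = Σ_i λ(a[i])`. -/
noncomputable def kap (S : Type*) [AddCommMonoid S] (w : S → ℕ) :
    (ATil S w →₀ ℕ) → FreeExp S :=
  Finsupp.mapDomain fun p => p.val.1

/-- The map `δ : ℕ₀^{𝒜(S̃)} → ℕ₀`, `δ(λ) = Σ i·λ(a[i])`. -/
def delt {S : Type*} [AddCommMonoid S] (w : S → ℕ) (l : ATil S w →₀ ℕ) : ℕ :=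
  l.sum fun p n => n * p.val.2

lemma kap_add {S : Type*} [AddCommMonoid S] (w : S → ℕ) (l m : ATil S w →₀ ℕ) :
    kap S w (l + m) = kap S w l + kap S w m := Finsupp.mapDomain_add

lemma delt_add {S : Type*} [AddCommMonoid S] (w : S → ℕ) (l m : ATil S w →₀ ℕ) :
    delt w (l + m) = delt w l + delt w m :=
  Finsupp.sum_add_index' (fun _ => zero_mul _) (fun _ m n => add_mul m n _)

/-- The defining congruence of `S̃` (under the identification `𝒜(S̃) = {a[i]}`,
`x^λ ∼_{S̃} x^μ` iff `a^{κλ} = a^{κμ}` in `S` and `δλ = δμ`). -/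
def defConTil (S : Type*) [AddCommMonoid S] (w : S → ℕ) : AddCon (ATil S w →₀ ℕ) where
  r l m := fac (kap S w l) = fac (kap S w m) ∧ delt w l = delt w m
  iseqv := ⟨fun _ => ⟨rfl, rfl⟩, fun h => ⟨h.1.symm, h.2.symm⟩,
    fun h h' => ⟨h.1.trans h'.1, h.2.trans h'.2⟩⟩
  add' := fun h1 h2 =>
    ⟨by rw [kap_add, kap_add, fac_add, fac_add, h1.1, h2.1],
     by rw [delt_add, delt_add, h1.2, h2.2]⟩

/-- The quadratic relations `(x_{a[k]} x_{b[l]}, x_{a[k+1]} x_{b[l-1]})`,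
for `a, b ∈ 𝒜(S)`, `0 ≤ k ≤ |a| - 1`, `1 ≤ l ≤ |b|`. -/
def quadRel (S : Type*) [AddCommMonoid S] (w : S → ℕ) :
    (ATil S w →₀ ℕ) → (ATil S w →₀ ℕ) → Prop := fun x y =>
  ∃ (a b : ↥(Atoms S)) (k l : ℕ) (hk : k + 1 ≤ w (a : S)) (_ : 1 ≤ l) (hl : l ≤ w (b : S)),
    x = Finsupp.single (atil w a k (Nat.le_of_succ_le hk)) 1 +
        Finsupp.single (atil w b l hl) 1 ∧
    y = Finsupp.single (atil w a (k + 1) hk) 1 +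
        Finsupp.single (atil w b (l - 1) (le_trans (Nat.sub_le l 1) hl)) 1

/-! ## Block monoids -/

/-- The block monoid `ℬ(g)` of a tuple `g = (g₁,…,g_m)` of elements of a commutative
monoid `G`. -/
def BlockT {G : Type*} [CommMonoid G] {m : ℕ} (g : Fin m → G) :
    AddSubmonoid (Fin m → ℕ) where
  carrier := {α | ∏ i, g i ^ α i = 1}
  zero_mem' := by simp
  add_mem' := by
    intro a b ha hb
    simp only [Set.mem_setOf_eq] at *
    show ∏ i, g i ^ (a i + b i) = 1
    simp [pow_add, Finset.prod_mul_distrib, ha, hb]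

/-- The block monoid `ℬ(G₀)` of a subset `G₀` of a commutative monoid `G`. -/
noncomputable def BlockS {G : Type*} [CommMonoid G] (G₀ : Set G) : AddSubmonoid (G₀ →₀ ℕ) where
  carrier := {α | (α.prod fun x n => (x : G) ^ n) = 1}
  zero_mem' := by simp
  add_mem' := by
    intro a b ha hb
    simp only [Set.mem_setOf_eq] at *
    rw [Finsupp.prod_add_index' (fun x => pow_zero _) (fun x m n => pow_add _ m n), ha, hb,
      one_mul]

/-- The monoid `S̃` for `S = ℬ(g)` graded by the last coordinate. -/
def TildeB {G : Type*} [CommMonoid G] {m : ℕ} (g : Fin (m + 1) → G) :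
    AddSubmonoid ((Fin (m + 1) → ℕ) × ℕ) where
  carrier := {p | p.1 ∈ BlockT g ∧ p.2 ≤ p.1 (Fin.last m)}
  zero_mem' := ⟨(BlockT g).zero_mem, le_rfl⟩
  add_mem' := by
    intro a b ha hb
    exact ⟨(BlockT g).add_mem ha.1 hb.1, add_le_add ha.2 hb.2⟩

/-- The Davenport constant `D(G₀)`: the maximal length of an atom of `ℬ(G₀)`. -/
noncomputable def DavenportC {G : Type*} [CommMonoid G] (G₀ : Set G) : ℕ :=
  sSup {k | ∃ γ : ↥(BlockS G₀), IsAtm γ ∧ degE (γ : G₀ →₀ ℕ) = k}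

/-- The little Davenport constant `d(G₀)`: the maximal length of a sequence over `G₀`
containing no product-one subsequence. -/
noncomputable def littleDav {G : Type*} [CommMonoid G] (G₀ : Set G) : ℕ :=
  sSup {k | ∃ α : G₀ →₀ ℕ, degE α = k ∧
    ∀ γ : ↥(BlockS G₀), IsAtm γ → ∃ x : G₀, α x < (γ : G₀ →₀ ℕ) x}

/-! ## Gröbner systems -/

/-- An admissible total order (given as a strict order relation) on a free commutative
monoid, written additively. -/
def IsAdmissible {F : Type*} [AddCommMonoid F] (lt : F → F → Prop) : Prop :=
  (∀ x y, lt x y ∨ x = y ∨ lt y x) ∧ (∀ x y z, lt x y → lt y z → lt x z) ∧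
  (∀ x, ¬ lt x x) ∧ (∀ x y z, lt x y → lt (x + z) (y + z)) ∧ (∀ x, x ≠ 0 → lt 0 x)

/-- `Λ` is a Gröbner system of the congruence `c` with respect to the order `lt`. -/
def IsGroebnerSystem {F : Type*} [AddCommMonoid F] (lt : F → F → Prop) (c : AddCon F)
    (Λ : Set (F × F)) : Prop :=
  Λ.Finite ∧ (∀ p ∈ Λ, c p.1 p.2 ∧ lt p.2 p.1) ∧
  (∀ z : F, (∀ p ∈ Λ, ¬ ∃ u, z = p.1 + u) → ∀ y, c z y → z = y ∨ lt z y)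

/-- The ordering on positions `a[i]` induced by an enumeration of the atoms. -/
def posLt {S : Type*} [AddCommMonoid S] {w : S → ℕ} {n : ℕ} (e : Fin n ≃ ↥(Atoms S))
    (q p : ATil S w) : Prop :=
  e.symm q.val.1 < e.symm p.val.1 ∨ (e.symm q.val.1 = e.symm p.val.1 ∧ q.val.2 < p.val.2)

/-- The admissible order on the free commutative monoid on `𝒜(S̃)` extending the order
`lt` on the free commutative monoid on `𝒜(S)`. -/
def ltTil {S : Type*} [AddCommMonoid S] (w : S → ℕ) (lt : FreeExp S → FreeExp S → Prop)
    {n : ℕ} (e : Fin n ≃ ↥(Atoms S)) (mu lam : ATil S w →₀ ℕ) : Prop :=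
  lt (kap S w mu) (kap S w lam) ∨
  (kap S w mu = kap S w lam ∧
    ∃ p : ATil S w, lam p < mu p ∧ ∀ q : ATil S w, posLt e q p → mu q = lam q)

/-- The set `Γ₂` of pairs `(x_{a[i]} x_{b[j]}, x_{a[i-1]} x_{b[j+1]})` with `x_a ≺ x_b`,
`0 < i ≤ |a|`, `0 ≤ j < |b|`. -/
def Gam2 (S : Type*) [AddCommMonoid S] (w : S → ℕ) (lt : FreeExp S → FreeExp S → Prop) :
    Set ((ATil S w →₀ ℕ) × (ATil S w →₀ ℕ)) :=
  {pr | ∃ (a b : ↥(Atoms S)) (i j : ℕ) (_ : 0 < i) (hi : i ≤ w (a : S)) (hj : j + 1 ≤ w (b : S)),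
    lt (Finsupp.single a 1) (Finsupp.single b 1) ∧
    pr = (Finsupp.single (atil w a i hi) 1 +
            Finsupp.single (atil w b j (Nat.le_of_succ_le hj)) 1,
          Finsupp.single (atil w a (i - 1) (le_trans (Nat.sub_le i 1) hi)) 1 +
            Finsupp.single (atil w b (j + 1) hj) 1)}

/-- The set `Γ₃` of pairs `(x_{a[i]} x_{a[j]}, x_{a[i-1]} x_{a[j+1]})` with `0 < i ≤ j < |a|`. -/
def Gam3 (S : Type*) [AddCommMonoid S] (w : S → ℕ) :
    Set ((ATil S w →₀ ℕ) × (ATil S w →₀ ℕ)) :=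
  {pr | ∃ (a : ↥(Atoms S)) (i j : ℕ) (_ : 0 < i) (hij : i ≤ j) (hj : j + 1 ≤ w (a : S)),
    pr = (Finsupp.single (atil w a i (le_trans hij (Nat.le_of_succ_le hj))) 1 +
            Finsupp.single (atil w a j (Nat.le_of_succ_le hj)) 1,
          Finsupp.single (atil w a (i - 1)
              (le_trans (Nat.sub_le i 1) (le_trans hij (Nat.le_of_succ_le hj)))) 1 +
            Finsupp.single (atil w a (j + 1) hj) 1)}

/-! ## The presentation homomorphism for semigroup rings -/

/-- The homomorphism `π_R : R[x_a : a ∈ 𝒜(S)] → R[S]`, `x_a ↦ a`. -/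
noncomputable def piR (R : Type*) (S : Type*) [CommRing R] [AddCommMonoid S] :
    MvPolynomial ↥(Atoms S) R →ₐ[R] AddMonoidAlgebra R S :=
  MvPolynomial.aeval fun a => AddMonoidAlgebra.single (a : S) 1

/-! ### Degree and sub-blocks -/

lemma degE_eq_degree {σ : Type*} (α : σ →₀ ℕ) : degE α = α.degree := rfl

lemma degE_add {σ : Type*} (α β : σ →₀ ℕ) : degE (α + β) = degE α + degE β := by
  simp only [degE_eq_degree, map_add]

lemma degE_single {σ : Type*} (x : σ) (n : ℕ) : degE (Finsupp.single x n) = n := by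
  simp only [degE_eq_degree, Finsupp.degree_single]

lemma degE_mono {σ : Type*} {α β : σ →₀ ℕ} (h : α ≤ β) : degE α ≤ degE β := by
  rw [← add_tsub_cancel_of_le h, degE_add]
  exact Nat.le_add_right _ _

lemma degE_pos {σ : Type*} {α : σ →₀ ℕ} (h : α ≠ 0) : 0 < degE α := by
  rw [Nat.pos_iff_ne_zero, degE_eq_degree, Ne, Finsupp.degree_eq_zero_iff]
  exact h

section Block

variable {G : Type*} [CommGroup G] {G₀ : Set G}

lemma prod_pow_add (α β : G₀ →₀ ℕ) :
    ((α + β).prod fun x n => (x : G) ^ n) =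
      (α.prod fun x n => (x : G) ^ n) * β.prod fun x n => (x : G) ^ n :=
  Finsupp.prod_add_index' (fun _ => pow_zero _) (fun _ _ _ => pow_add _ _ _)

lemma prod_pow_single (x : G₀) : ((Finsupp.single x 1).prod fun x n => (x : G) ^ n) = x :=
  (Finsupp.prod_single_index (h := fun (x : G₀) n => (x : G) ^ n) (pow_zero _)).trans (pow_one _)

lemma mem_of_add_mem {a b : G₀ →₀ ℕ} (ha : a ∈ BlockS G₀) (h : a + b ∈ BlockS G₀) :
    b ∈ BlockS G₀ := by
  change Finsupp.prod _ _ = 1 at ha h ⊢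
  rwa [prod_pow_add, ha, one_mul] at h

lemma tsub_mem {a b : G₀ →₀ ℕ} (ha : a ∈ BlockS G₀) (hb : b ∈ BlockS G₀) (h : a ≤ b) :
    b - a ∈ BlockS G₀ :=
  mem_of_add_mem ha (by rwa [add_tsub_cancel_of_le h])

/-! ### Factorizations into atoms -/

/-- The graded degree of a factorization depends only on the factored element. -/
lemma degE_fac (α : FreeExp ↥(BlockS G₀)) :
    gdegE (fun α : ↥(BlockS G₀) => degE (α : ↥G₀ →₀ ℕ)) α =
      degE ((fac α : ↥(BlockS G₀)) : G₀ →₀ ℕ) := by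
  let φ : ↥(BlockS G₀) →+ ℕ := Finsupp.degree.comp (BlockS G₀).subtype
  change _ = φ (fac α)
  rw [fac, map_finsuppSum]
  refine Finsupp.sum_congr fun a _ => ?_
  rw [map_nsmul, smul_eq_mul]
  rfl

lemma fac_single {S : Type*} [AddCommMonoid S] (a : ↥(Atoms S)) :
    fac (Finsupp.single a 1) = (a : S) := by
  exact (Finsupp.sum_single_index (h := fun (x : ↥(Atoms S)) n => n • (x : S))
    (zero_nsmul _)).trans (one_nsmul _)

/-- Every element factors into atoms, because an element that is neither zero nor an atom splits
into two elements of smaller degree. -/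
lemma exists_fac (s : ↥(BlockS G₀)) : ∃ α, fac α = s := by
  induction h : degE (s : G₀ →₀ ℕ) using Nat.strong_induction_on generalizing s with
  | _ n ih =>
    subst h
    by_cases h0 : s = 0
    · exact ⟨0, by rw [h0]; exact Finsupp.sum_zero_index⟩
    by_cases ha : IsAtm s
    · exact ⟨Finsupp.single ⟨s, ha⟩ 1, fac_single _⟩
    have : ∃ b c : ↥(BlockS G₀), s = b + c ∧ b ≠ 0 ∧ c ≠ 0 := by
      by_contra! hc
      exact ha ⟨h0, fun b c hbc => or_iff_not_imp_left.2 (hc b c hbc)⟩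
    obtain ⟨b, c, rfl, hb, hc⟩ := this
    have hb' : 0 < degE (b : G₀ →₀ ℕ) := degE_pos (by simpa using hb)
    have hc' : 0 < degE (c : G₀ →₀ ℕ) := degE_pos (by simpa using hc)
    have hd : degE ((b + c : ↥(BlockS G₀)) : G₀ →₀ ℕ) = degE (b : G₀ →₀ ℕ) + degE (c : G₀ →₀ ℕ) :=
      degE_add _ _
    obtain ⟨β, hβ⟩ := ih _ (by omega) b rfl
    obtain ⟨γ, hγ⟩ := ih _ (by omega) c rfl
    exact ⟨β + γ, by rw [fac_add, hβ, hγ]⟩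

lemma exists_eq_single_add {σ : Type*} {α : σ →₀ ℕ} (h : α ≠ 0) :
    ∃ (a : σ) (β : σ →₀ ℕ), α = Finsupp.single a 1 + β := by
  obtain ⟨a, ha⟩ := Finsupp.ne_iff.1 h
  refine ⟨a, α - Finsupp.single a 1, (add_tsub_cancel_of_le ?_).symm⟩
  rw [Finsupp.single_le_iff]
  exact Nat.one_le_iff_ne_zero.2 ha

lemma exists_atom_le {β : G₀ →₀ ℕ} (hβ : β ∈ BlockS G₀) (h0 : β ≠ 0) :
    ∃ U : ↥(BlockS G₀), IsAtm U ∧ (U : G₀ →₀ ℕ) ≤ β := by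
  obtain ⟨α, hα⟩ := exists_fac ⟨β, hβ⟩
  have : α ≠ 0 := by
    rintro rfl
    apply h0
    have h1 : (0 : ↥(BlockS G₀)) = ⟨β, hβ⟩ := by rw [← hα]; exact Finsupp.sum_zero_index.symm
    exact (congrArg Subtype.val h1).symm
  obtain ⟨U, δ, rfl⟩ := exists_eq_single_add this
  refine ⟨U, U.2, ?_⟩
  rw [fac_add, fac_single] at hα
  have h2 : ((U : ↥(BlockS G₀)) : G₀ →₀ ℕ) + (fac δ : ↥(BlockS G₀)) = β := congrArg Subtype.val hα
  rw [← h2]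
  exact le_self_add

/-! ### The constants `d(G₀)` and `D(G)` -/

/-- The defining condition of `littleDav`: no atom of the block monoid divides `α`. -/
def NoAtom (α : G₀ →₀ ℕ) : Prop :=
  ∀ γ : ↥(BlockS G₀), IsAtm γ → ∃ x : G₀, α x < (γ : G₀ →₀ ℕ) x

lemma noAtom_iff {α : G₀ →₀ ℕ} :
    NoAtom α ↔ ∀ γ : ↥(BlockS G₀), IsAtm γ → ¬ (γ : G₀ →₀ ℕ) ≤ α := by
  simp only [NoAtom, Finsupp.le_def, not_forall, not_le]

lemma prod_toFinsupp [DecidableEq G₀] (l : List G₀) :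
    ((Multiset.toFinsupp (l : Multiset G₀)).prod fun x n => (x : G) ^ n) =
      (l.map Subtype.val).prod := by
  induction l with
  | nil => simp
  | cons x l ih =>
    rw [← Multiset.cons_coe, ← Multiset.singleton_add, map_add, prod_pow_add, ih,
      Multiset.toFinsupp_singleton, prod_pow_single, List.map_cons, List.prod_cons]

/-- Of the `|G| + 1` products of initial segments of a sequence of length at least `|G|`, two
coincide, and the segment between them has product one. -/
lemma exists_block_le [Finite G] {α : G₀ →₀ ℕ} (h : Nat.card G ≤ degE α) :
    ∃ β ∈ BlockS G₀, β ≠ 0 ∧ β ≤ α := by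
  classical
  have := Fintype.ofFinite G
  obtain ⟨l, hl⟩ := Quot.exists_rep (Finsupp.toMultiset α)
  have hl' : (l : Multiset G₀) = Finsupp.toMultiset α := hl
  have hα : Multiset.toFinsupp (l : Multiset G₀) = α := by
    rw [hl', Finsupp.toMultiset_toFinsupp]
  have hlen : l.length = degE α := by
    rw [← Multiset.coe_card, hl', Finsupp.card_toMultiset]
    rfl
  rw [← hlen, Nat.card_eq_fintype_card] at h
  let f : Fin (l.length + 1) → G := fun i => ((l.take i).map Subtype.val).prod
  obtain ⟨i, j, hij, hf⟩ : ∃ i j : Fin (l.length + 1), i < j ∧ f i = f j := by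
    obtain ⟨i, j, hne, hf⟩ := Fintype.exists_ne_map_eq_of_card_lt f (by simpa using by omega)
    rcases lt_or_gt_of_ne hne with h | h
    · exact ⟨i, j, h, hf⟩
    · exact ⟨j, i, h, hf.symm⟩
  have hij' : (i : ℕ) < j := hij
  have hj : (j : ℕ) ≤ l.length := Nat.lt_succ_iff.1 j.2
  have hsplit : l.take j = l.take i ++ (l.take j).drop i := by
    conv_lhs => rw [← List.take_append_drop i (l.take j)]
    rw [List.take_take, min_eq_left hij'.le]
  refine ⟨Multiset.toFinsupp (((l.take j).drop i : List G₀) : Multiset G₀), ?_, ?_, ?_⟩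
  · change Finsupp.prod _ _ = 1
    rw [prod_toFinsupp]
    have h2 : f j = f i * (((l.take j).drop i).map Subtype.val).prod := by
      change ((l.take j).map Subtype.val).prod = _
      rw [hsplit, List.map_append, List.prod_append, ← hsplit]
    rw [hf] at h2
    exact left_eq_mul.1 h2
  · intro h0
    have h1 := congrArg Finsupp.toMultiset h0
    rw [Multiset.toFinsupp_toMultiset, map_zero, Multiset.coe_eq_zero] at h1
    have := congrArg List.length h1
    simp at this
    omega
  · rw [← hα]
    exact Multiset.toFinsupp_strictMono.monotone
      (Multiset.coe_le.2 ((List.drop_sublist _ _).trans (List.take_sublist _ _)).subperm)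

lemma NoAtom.eq_zero {α β : G₀ →₀ ℕ} (h : NoAtom α) (hβ : β ∈ BlockS G₀) (hle : β ≤ α) :
    β = 0 := by
  by_contra h0
  obtain ⟨U, hU, hUβ⟩ := exists_atom_le hβ h0
  exact noAtom_iff.1 h U hU (hUβ.trans hle)

/-- A sequence that no atom divides still has this property when regarded as a sequence over the
whole group. -/
lemma NoAtom.mapDomain {α : G₀ →₀ ℕ} (h : NoAtom α) {c : ↥(Set.univ : Set G) →₀ ℕ}
    (hc : c ∈ BlockS (Set.univ : Set G))
    (hle : c ≤ α.mapDomain (Set.inclusion (Set.subset_univ G₀))) : c = 0 := by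
  have hinj : Function.Injective (Set.inclusion (Set.subset_univ G₀)) :=
    Set.inclusion_injective _
  have hmc := Finsupp.mapDomain_comapDomain (Set.inclusion (Set.subset_univ G₀)) hinj c (by
    intro y hy
    by_contra hn
    have h1 := hle y
    rw [Finsupp.mapDomain_of_notMem_range _ _ hn] at h1
    exact Finsupp.mem_support_iff.1 hy (Nat.le_zero.1 h1))
  set b := Finsupp.comapDomain (Set.inclusion (Set.subset_univ G₀)) c hinj.injOn with hb
  have hb0 : b = 0 := by
    refine h.eq_zero ?_ fun x => ?_
    · change Finsupp.prod _ _ = 1 at hc ⊢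
      rw [← hmc, Finsupp.prod_mapDomain_index_inj hinj] at hc
      exact hc
    · have h1 := hle (Set.inclusion (Set.subset_univ G₀) x)
      rwa [Finsupp.mapDomain_apply hinj] at h1
  rw [← hmc, hb0, Finsupp.mapDomain_zero]

section Finite

variable [Finite G]

lemma NoAtom.degE_lt_card {α : G₀ →₀ ℕ} (h : NoAtom α) : degE α < Nat.card G := by
  by_contra! hc
  obtain ⟨β, hβ, h0, hle⟩ := exists_block_le hc
  exact h0 (h.eq_zero hβ hle)

lemma bddAbove_noAtom : BddAbove {k | ∃ α : G₀ →₀ ℕ, degE α = k ∧ NoAtom α} := by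
  refine ⟨Nat.card G, ?_⟩
  rintro _ ⟨α, rfl, hα⟩
  exact hα.degE_lt_card.le

lemma NoAtom.degE_le {α : G₀ →₀ ℕ} (h : NoAtom α) : degE α ≤ littleDav G₀ :=
  le_csSup bddAbove_noAtom ⟨α, rfl, h⟩

variable (G₀) in
lemma exists_noAtom : ∃ α : G₀ →₀ ℕ, degE α = littleDav G₀ ∧ NoAtom α := by
  refine Nat.sSup_mem (s := {k | ∃ α : G₀ →₀ ℕ, degE α = k ∧ NoAtom α}) ?_ bddAbove_noAtom
  refine ⟨0, 0, Finsupp.sum_zero_index, noAtom_iff.2 fun γ hγ hle => hγ.1 ?_⟩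
  exact Subtype.ext (le_antisymm hle zero_le)

lemma exists_atom_of_lt {α : G₀ →₀ ℕ} (h : littleDav G₀ < degE α) :
    ∃ U : ↥(BlockS G₀), IsAtm U ∧ (U : G₀ →₀ ℕ) ≤ α := by
  by_contra! hc
  exact h.not_ge (noAtom_iff.2 hc).degE_le

/-- Removing one element from an atom leaves a sequence that no atom divides. -/
lemma degE_atom_le {U : ↥(BlockS G₀)} (hU : IsAtm U) :
    degE (U : G₀ →₀ ℕ) ≤ littleDav G₀ + 1 := by
  have h0 : (U : G₀ →₀ ℕ) ≠ 0 := fun h => hU.1 (Subtype.ext h)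
  obtain ⟨x, β, hβ⟩ := exists_eq_single_add h0
  rw [hβ, degE_add, degE_single, add_comm, Nat.add_le_add_iff_right]
  refine NoAtom.degE_le (noAtom_iff.2 fun V hV hle => ?_)
  have hVU : (V : G₀ →₀ ℕ) ≤ U := hle.trans (by rw [hβ]; exact le_add_self)
  have hUV : U = V + ⟨(U : G₀ →₀ ℕ) - V, tsub_mem V.2 U.2 hVU⟩ :=
    Subtype.ext (add_tsub_cancel_of_le hVU).symm
  rcases hU.2 _ _ hUV with h | h
  · exact hV.1 h
  · have h1 : (U : G₀ →₀ ℕ) - V = 0 := congrArg Subtype.val h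
    have h2 := (tsub_eq_zero_iff_le.1 h1).trans hle
    have h3 := degE_mono h2
    rw [hβ, degE_add, degE_single] at h3
    omega

variable (G) in
lemma davenportC_le_card : DavenportC (Set.univ : Set G) ≤ Nat.card G := by
  have h0 : 0 < Nat.card G := Nat.card_pos
  refine csSup_le' ?_
  rintro _ ⟨γ, hγ, rfl⟩
  obtain ⟨α, hα, hα'⟩ := exists_noAtom (Set.univ : Set G)
  have := degE_atom_le hγ
  have := hα'.degE_lt_card
  omega

lemma degE_le_davenportC {γ : ↥(BlockS G₀)} (hγ : IsAtm γ) :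
    degE (γ : G₀ →₀ ℕ) ≤ DavenportC G₀ := by
  refine le_csSup ⟨littleDav G₀ + 1, ?_⟩ ⟨γ, hγ, rfl⟩
  rintro _ ⟨δ, hδ, rfl⟩
  exact degE_atom_le hδ

variable (G₀) in
/-- Appending the inverse of its product to a longest sequence that no atom divides produces an
atom over `G`. -/
lemma littleDav_add_one_le : littleDav G₀ + 1 ≤ DavenportC (Set.univ : Set G) := by
  obtain ⟨α, hα, hno⟩ := exists_noAtom G₀
  set α' := α.mapDomain (Set.inclusion (Set.subset_univ G₀)) with hα'
  have hdeg : degE α' = littleDav G₀ := by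
    rw [← hα, degE_eq_degree, degE_eq_degree, hα', Finsupp.degree_mapDomain]
  let g : ↥(Set.univ : Set G) := ⟨(α'.prod fun x n => (x : G) ^ n)⁻¹, trivial⟩
  have hmem : α' + Finsupp.single g 1 ∈ BlockS (Set.univ : Set G) := by
    change Finsupp.prod _ _ = 1
    rw [prod_pow_add, prod_pow_single]
    exact mul_inv_cancel _
  -- The summand not containing the new element `g` divides `α'`, hence vanishes.
  have key : ∀ b c : ↥(BlockS (Set.univ : Set G)),
      (b : ↥(Set.univ : Set G) →₀ ℕ) + (c : ↥(Set.univ : Set G) →₀ ℕ) = α' + Finsupp.single g 1 →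
      1 ≤ (b : ↥(Set.univ : Set G) →₀ ℕ) g → c = 0 := by
    intro b c hbc hg
    refine Subtype.ext (hno.mapDomain c.2 ?_)
    have hgb : Finsupp.single g 1 ≤ (b : ↥(Set.univ : Set G) →₀ ℕ) :=
      Finsupp.single_le_iff.2 hg
    rw [← add_tsub_cancel_of_le hgb, add_assoc, add_comm α'] at hbc
    rw [← hα', ← add_left_cancel hbc]
    exact le_add_self
  have hatm : IsAtm (⟨_, hmem⟩ : ↥(BlockS (Set.univ : Set G))) := by
    refine ⟨fun h => ?_, fun b c hbc => ?_⟩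
    · have h1 : α' + Finsupp.single g 1 = 0 := congrArg Subtype.val h
      have h2 := congrArg degE h1
      rw [degE_add, degE_single] at h2
      simp [degE_eq_degree] at h2
    · have h1 : α' + Finsupp.single g 1 =
          (b : ↥(Set.univ : Set G) →₀ ℕ) + (c : ↥(Set.univ : Set G) →₀ ℕ) :=
        congrArg Subtype.val hbc
      have h2 := DFunLike.congr_fun h1 g
      simp only [Finsupp.add_apply, Finsupp.single_eq_same] at h2
      by_cases hb : 1 ≤ (b : ↥(Set.univ : Set G) →₀ ℕ) g
      · exact Or.inr (key b c h1.symm hb)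
      · exact Or.inl (key c b (by rw [add_comm, h1]) (by omega))
  have := degE_le_davenportC hatm
  rw [degE_add, degE_single, hdeg] at this
  exact this

end Finite

end Block

/-! ### Chains of factorizations -/

/-- One step of a chain of weight at most `d`. -/
def ChainStep {S : Type*} [AddCommMonoid S] (w : S → ℕ) (d : ℕ) (α γ : FreeExp S) : Prop :=
  fac α = fac γ ∧ dDistGr w α γ ≤ d

lemma chainConnGr_of_reflTransGen {S : Type*} [AddCommMonoid S] {w : S → ℕ} {d : ℕ}
    {α γ : FreeExp S} (h : Relation.ReflTransGen (ChainStep w d) α γ) : ChainConnGr w d α γ := by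
  induction h with
  | refl => exact ⟨0, fun _ => α, rfl, rfl, fun j hj => absurd hj (Nat.not_lt_zero j)⟩
  | @tail β γ _ hs ih =>
    obtain ⟨k, c, h0, hk, hc⟩ := ih
    refine ⟨k + 1, fun j => if j ≤ k then c j else γ, by simp [h0], by simp, fun j hj => ?_⟩
    rcases Nat.lt_succ_iff_lt_or_eq.1 hj with hlt | rfl
    · simpa [hlt.le, Nat.succ_le_iff.2 hlt] using hc j hlt
    · simpa [hk] using show fac β = fac γ ∧ dDistGr w β γ ≤ d from hs

lemma ChainStep.add_left {S : Type*} [AddCommMonoid S] {w : S → ℕ} {d : ℕ}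
    {α γ : FreeExp S} (μ : FreeExp S) (h : ChainStep w d α γ) :
    ChainStep w d (μ + α) (μ + γ) := by
  have h1 : μ + α - gcdE (μ + α) (μ + γ) = α - gcdE α γ := by
    ext a
    simp only [gcdE, Finsupp.tsub_apply, Finsupp.add_apply, Finsupp.zipWith_apply]
    omega
  have h2 : μ + γ - gcdE (μ + α) (μ + γ) = γ - gcdE α γ := by
    ext a
    simp only [gcdE, Finsupp.tsub_apply, Finsupp.add_apply, Finsupp.zipWith_apply]
    omega
  refine ⟨by rw [fac_add, fac_add, h.1], ?_⟩
  rw [dDistGr, h1, h2]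
  exact h.2

section Connect

variable {G : Type*} [CommGroup G] {G₀ : Set G}

/-- The grading of the block monoid by total degree. -/
abbrev blockDeg (G₀ : Set G) : ↥(BlockS G₀) → ℕ := fun α => degE (α : ↥G₀ →₀ ℕ)

lemma gdegE_tsub_le (α g : FreeExp ↥(BlockS G₀)) (hg : g ≤ α) :
    gdegE (blockDeg G₀) (α - g) ≤ degE ((fac α : ↥(BlockS G₀)) : G₀ →₀ ℕ) := by
  rw [degE_fac]
  refine degE_mono ?_
  conv_rhs => rw [← tsub_add_cancel_of_le hg, fac_add]
  exact le_self_add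

lemma gcdE_le_left {σ : Type*} (α β : σ →₀ ℕ) : gcdE α β ≤ α :=
  fun _ => min_le_left _ _

lemma gcdE_le_right {σ : Type*} (α β : σ →₀ ℕ) : gcdE α β ≤ β :=
  fun _ => min_le_right _ _

/-- Two factorizations of an element of degree at most `d` form a single step. -/
lemma chainStep_of_degE_le {d : ℕ} {α γ : FreeExp ↥(BlockS G₀)} (h : fac α = fac γ)
    (hd : degE ((fac α : ↥(BlockS G₀)) : G₀ →₀ ℕ) ≤ d) : ChainStep (blockDeg G₀) d α γ :=
  ⟨h, max_le ((gdegE_tsub_le α _ (gcdE_le_left α γ)).trans hd)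
    ((gdegE_tsub_le γ _ (gcdE_le_right α γ)).trans (h ▸ hd))⟩

/-- Every factorization of `A` in which the atom `U` occurs is connected, by a chain with steps of
graded distance at most `d`, to every factorization of `A` in which the atom `V` occurs. -/
def Linked (d : ℕ) (A : ↥(BlockS G₀)) (U V : ↥(Atoms ↥(BlockS G₀))) : Prop :=
  ∀ α γ : FreeExp ↥(BlockS G₀),
    fac (Finsupp.single U 1 + α) = A → fac (Finsupp.single V 1 + γ) = A →
    Relation.ReflTransGen (ChainStep (blockDeg G₀) d)
      (Finsupp.single U 1 + α) (Finsupp.single V 1 + γ)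

/-- All factorizations of every element of degree less than `n` are connected by chains with steps
of graded distance at most `d`. -/
def ConnectedBelow (G₀ : Set G) (d n : ℕ) : Prop :=
  ∀ α γ : FreeExp ↥(BlockS G₀), fac α = fac γ →
    degE ((fac α : ↥(BlockS G₀)) : G₀ →₀ ℕ) < n →
    Relation.ReflTransGen (ChainStep (blockDeg G₀) d) α γ

variable {d : ℕ} {A : ↥(BlockS G₀)}

lemma exists_fac_single_add (U : ↥(Atoms ↥(BlockS G₀)))
    (h : ((U : ↥(BlockS G₀)) : G₀ →₀ ℕ) ≤ A) : ∃ α, fac (Finsupp.single U 1 + α) = A := by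
  obtain ⟨α, hα⟩ := exists_fac ⟨(A : G₀ →₀ ℕ) - ((U : ↥(BlockS G₀)) : G₀ →₀ ℕ),
    tsub_mem U.1.2 A.2 h⟩
  refine ⟨α, Subtype.ext ?_⟩
  rw [fac_add, fac_single, hα]
  exact add_tsub_cancel_of_le h

lemma linked_self (ih : ConnectedBelow G₀ d (degE (A : G₀ →₀ ℕ)))
    (U : ↥(Atoms ↥(BlockS G₀))) : Linked d A U U := by
  intro α γ hα hγ
  have hU : 0 < degE ((U : ↥(BlockS G₀)) : G₀ →₀ ℕ) :=
    degE_pos fun h => U.2.1 (Subtype.ext h)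
  have hdeg := congrArg (fun s : ↥(BlockS G₀) => degE (s : G₀ →₀ ℕ)) hα
  rw [fac_add, fac_single] at hα hγ
  simp only [fac_add, fac_single, AddSubmonoid.coe_add, degE_add] at hdeg
  have heq : fac α = fac γ := Subtype.ext (add_left_cancel (congrArg Subtype.val (hα.trans hγ.symm)))
  exact (ih α γ heq (by omega)).lift _ fun _ _ h => h.add_left _

lemma Linked.trans {U V W : ↥(Atoms ↥(BlockS G₀))} (hV : ((V : ↥(BlockS G₀)) : G₀ →₀ ℕ) ≤ A)
    (h₁ : Linked d A U V) (h₂ : Linked d A V W) : Linked d A U W := by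
  intro α γ hα hγ
  obtain ⟨β, hβ⟩ := exists_fac_single_add V hV
  exact (h₁ α β hα hβ).trans (h₂ β γ hβ hγ)

/-- If `U + V ≤ A`, then some factorization of `A` contains both atoms. -/
lemma linked_of_add_le (ih : ConnectedBelow G₀ d (degE (A : G₀ →₀ ℕ)))
    {U V : ↥(Atoms ↥(BlockS G₀))}
    (h : ((U : ↥(BlockS G₀)) : G₀ →₀ ℕ) + ((V : ↥(BlockS G₀)) : G₀ →₀ ℕ) ≤ A) :
    Linked d A U V := by
  intro α γ hα hγ
  obtain ⟨δ, hδ⟩ := exists_fac ⟨(A : G₀ →₀ ℕ) - (U.1 + V.1 : ↥(BlockS G₀)).1,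
    tsub_mem (U.1 + V.1).2 A.2 h⟩
  have h1 : fac (Finsupp.single U 1 + (Finsupp.single V 1 + δ)) = A := by
    rw [← add_assoc, fac_add, fac_add, fac_single, fac_single, hδ]
    exact Subtype.ext (add_tsub_cancel_of_le h)
  have h2 := h1
  rw [add_left_comm] at h2
  have h3 := linked_self ih U _ _ hα h1
  rw [add_left_comm] at h3
  exact h3.trans (linked_self ih V _ _ h2 hγ)

lemma exists_atom_le_tsub [Finite G] {T : G₀ →₀ ℕ} (hT : T ≤ A)
    (h : littleDav G₀ + degE T < degE (A : G₀ →₀ ℕ)) :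
    ∃ W : ↥(Atoms ↥(BlockS G₀)), ((W : ↥(BlockS G₀)) : G₀ →₀ ℕ) + T ≤ A := by
  have h1 : degE ((A : G₀ →₀ ℕ) - T) + degE T = degE (A : G₀ →₀ ℕ) := by
    rw [← degE_add, tsub_add_cancel_of_le hT]
  obtain ⟨W, hW, hle⟩ := exists_atom_of_lt (α := (A : G₀ →₀ ℕ) - T) (by omega)
  exact ⟨⟨W, hW⟩, (le_tsub_iff_right hT).1 hle⟩

/-- Walk from `T` to `T'` by exchanging one element at a time. Two neighbouring subsequences have
a union of size `d(G₀) + 2`, whose complement in `A` has size at least `d(G₀) + 1` and so contains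
an atom; the sum of that atom and any atom in either of the two subsequences is at most `A`. -/
lemma linked_of_le [Finite G] (ih : ConnectedBelow G₀ d (degE (A : G₀ →₀ ℕ)))
    (hA : 2 * littleDav G₀ + 2 < degE (A : G₀ →₀ ℕ)) (n : ℕ) :
    ∀ {T T' : G₀ →₀ ℕ}, degE (T - T') = n → T ≤ A → T' ≤ A →
      degE T = littleDav G₀ + 1 → degE T' = littleDav G₀ + 1 →
      ∀ U V : ↥(Atoms ↥(BlockS G₀)), ((U : ↥(BlockS G₀)) : G₀ →₀ ℕ) ≤ T →
        ((V : ↥(BlockS G₀)) : G₀ →₀ ℕ) ≤ T' → Linked d A U V := by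
  induction n with
  | zero =>
    intro T T' hn hT hT' hd hd' U V hU hV
    have h1 : T ≤ T' := by
      rw [degE_eq_degree, Finsupp.degree_eq_zero_iff] at hn
      exact tsub_eq_zero_iff_le.1 hn
    obtain ⟨W, hW⟩ := exists_atom_le_tsub hT' (by omega)
    refine Linked.trans (le_self_add.trans hW) (linked_of_add_le ih ?_) (linked_of_add_le ih ?_)
    · rw [add_comm]
      exact (add_le_add_right (hU.trans h1) _).trans hW
    · exact (add_le_add_right hV _).trans hW
  | succ n ihn =>
    intro T T' hn hT hT' hd hd' U V hU hV
    obtain ⟨x, hx⟩ : ∃ x, T' x < T x := by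
      by_contra! hc
      rw [tsub_eq_zero_iff_le.2 (show T ≤ T' from hc)] at hn
      simp [degE_eq_degree] at hn
    obtain ⟨y, hy⟩ : ∃ y, T y < T' y := by
      by_contra! hc
      have h1 : T' + (T - T') = T := add_tsub_cancel_of_le (show T' ≤ T from hc)
      have h2 := congrArg degE h1
      rw [degE_add] at h2
      omega
    have hxT : Finsupp.single x 1 ≤ T := Finsupp.single_le_iff.2 (by omega)
    obtain ⟨R, rfl⟩ := exists_add_of_le hxT
    have hne : x ≠ y := by
      rintro rfl
      omega
    simp only [Finsupp.add_apply, Finsupp.single_eq_same] at hx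
    simp only [Finsupp.add_apply, Finsupp.single_eq_of_ne' hne] at hy
    have hyA : Finsupp.single y 1 + (Finsupp.single x 1 + R) ≤ (A : G₀ →₀ ℕ) := by
      intro z
      have h1 := hT z
      have h2 := hT' z
      by_cases hz : z = y
      · subst hz
        simp only [Finsupp.add_apply, Finsupp.single_eq_same, Finsupp.single_eq_of_ne' hne]
        omega
      · simpa [Finsupp.single_eq_of_ne hz] using h1
    have hd1 := hd
    rw [degE_add, degE_single] at hd1
    obtain ⟨W, hW⟩ := exists_atom_le_tsub hyA (by rw [degE_add, degE_single]; omega)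
    have hdy : degE (Finsupp.single y 1 + R) = littleDav G₀ + 1 := by
      rw [degE_add, degE_single]
      omega
    obtain ⟨V₁, hV₁, hle⟩ := exists_atom_of_lt (α := Finsupp.single y 1 + R) (by omega)
    have hyR : Finsupp.single y 1 + R ≤ Finsupp.single y 1 + (Finsupp.single x 1 + R) :=
      add_le_add_right le_add_self _
    have hV₁A := hle.trans (hyR.trans hyA)
    -- Exchanging `x` for `y` brings the subsequence one element closer to `T'`.
    have hdist : Finsupp.single x 1 + (Finsupp.single y 1 + R - T') =
        Finsupp.single x 1 + R - T' := by
      ext z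
      simp only [Finsupp.add_apply, Finsupp.tsub_apply]
      by_cases hzx : z = x
      · subst hzx
        simp only [Finsupp.single_eq_same, Finsupp.single_eq_of_ne hne]
        omega
      by_cases hzy : z = y
      · subst hzy
        simp only [Finsupp.single_eq_same, Finsupp.single_eq_of_ne hzx]
        omega
      · simp only [Finsupp.single_eq_of_ne hzx, Finsupp.single_eq_of_ne hzy]
        omega
    rw [← hdist, degE_add, degE_single] at hn
    refine Linked.trans (V := W) (le_self_add.trans hW) (linked_of_add_le ih ?_)
      (Linked.trans (V := ⟨V₁, hV₁⟩) hV₁A (linked_of_add_le ih ?_)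
        (ihn (by omega) (hyR.trans hyA) hT' hdy hd' _ V hle hV))
    · rw [add_comm]
      exact (add_le_add_right (hU.trans le_add_self) _).trans hW
    · exact (add_le_add_right (hle.trans hyR) _).trans hW

/-- Atoms have length at most `d(G₀) + 1`, so each atom of `A` extends to a subsequence of `A` of
exactly that length. -/
lemma exists_extension [Finite G] (hA : 2 * littleDav G₀ + 2 < degE (A : G₀ →₀ ℕ))
    (U : ↥(Atoms ↥(BlockS G₀))) (hU : ((U : ↥(BlockS G₀)) : G₀ →₀ ℕ) ≤ A) :
    ∃ T : G₀ →₀ ℕ, T ≤ A ∧ degE T = littleDav G₀ + 1 ∧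
      ((U : ↥(BlockS G₀)) : G₀ →₀ ℕ) ≤ T := by
  have h1 := degE_atom_le U.2
  have h2 : degE ((U : ↥(BlockS G₀)) : G₀ →₀ ℕ) +
      degE ((A : G₀ →₀ ℕ) - ((U : ↥(BlockS G₀)) : G₀ →₀ ℕ)) = degE (A : G₀ →₀ ℕ) := by
    rw [← degE_add, add_tsub_cancel_of_le hU]
  obtain ⟨R, hR, hRd⟩ := Finsupp.exists_le_degree_eq
    ((A : G₀ →₀ ℕ) - ((U : ↥(BlockS G₀)) : G₀ →₀ ℕ))
    (littleDav G₀ + 1 - degE ((U : ↥(BlockS G₀)) : G₀ →₀ ℕ))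
    (by rw [← degE_eq_degree]; omega)
  refine ⟨(U : ↥(BlockS G₀)) + R, ?_, ?_, le_self_add⟩
  · exact (add_le_add_right hR _).trans (add_tsub_cancel_of_le hU).le
  · rw [← degE_eq_degree] at hRd
    rw [degE_add, hRd]
    omega

lemma chain_of_fac_eq [Finite G] (α γ : FreeExp ↥(BlockS G₀)) (h : fac α = fac γ) :
    Relation.ReflTransGen (ChainStep (blockDeg G₀) (2 * littleDav G₀ + 2)) α γ := by
  induction hn : degE ((fac α : ↥(BlockS G₀)) : G₀ →₀ ℕ) using Nat.strong_induction_on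
    generalizing α γ with
  | _ n ih =>
    subst hn
    rcases le_or_gt (degE ((fac α : ↥(BlockS G₀)) : G₀ →₀ ℕ)) (2 * littleDav G₀ + 2) with hA | hA
    · exact .single (chainStep_of_degE_le h hA)
    have ih' : ConnectedBelow G₀ (2 * littleDav G₀ + 2)
        (degE ((fac α : ↥(BlockS G₀)) : G₀ →₀ ℕ)) :=
      fun β δ hβ hlt => ih _ hlt β δ hβ rfl
    -- An element of positive degree has no empty factorization.
    have hne : ∀ β : FreeExp ↥(BlockS G₀), fac β = fac α → β ≠ 0 := by
      rintro _ hβ rfl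
      rw [← hβ] at hA
      exact Nat.not_lt_zero _ hA
    obtain ⟨U, α', rfl⟩ := exists_eq_single_add (hne α rfl)
    obtain ⟨V, γ', rfl⟩ := exists_eq_single_add (hne γ h.symm)
    have hU : ((U : ↥(BlockS G₀)) : G₀ →₀ ℕ) ≤
        ((fac (Finsupp.single U 1 + α') : ↥(BlockS G₀)) : G₀ →₀ ℕ) := by
      rw [fac_add, fac_single]
      exact le_self_add
    have hV : ((V : ↥(BlockS G₀)) : G₀ →₀ ℕ) ≤
        ((fac (Finsupp.single U 1 + α') : ↥(BlockS G₀)) : G₀ →₀ ℕ) := by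
      rw [h, fac_add, fac_single]
      exact le_self_add
    obtain ⟨T, hTA, hTd, hUT⟩ := exists_extension hA U hU
    obtain ⟨T', hTA', hTd', hVT⟩ := exists_extension hA V hV
    exact linked_of_le ih' hA _ rfl hTA hTA' hTd hTd' U V hUT hVT α' γ' rfl h.symm

end Connect

/-- Corollary 6.3: for any subset `G₀` of a finite abelian group `G`,
`c_gr(ℬ(G₀)) ≤ 2·d(G₀) + 2 ≤ 2·D(G) ≤ 2·|G|` (grading by total degree). -/
theorem graded_catenary_chain_bounds (G : Type) [CommGroup G] [Finite G] (G₀ : Set G) :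
    catDegGr ↥(BlockS G₀) (fun α => degE (α : ↥G₀ →₀ ℕ)) ≤ 2 * littleDav G₀ + 2 ∧
    2 * littleDav G₀ + 2 ≤ 2 * DavenportC (Set.univ : Set G) ∧
    2 * DavenportC (Set.univ : Set G) ≤ 2 * Nat.card G := by
  have h₁ := littleDav_add_one_le G₀
  have h₂ := davenportC_le_card G
  exact ⟨Nat.sInf_le fun α γ h => chainConnGr_of_reflTransGen (chain_of_fac_eq α γ h),
    by omega, by omega⟩
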